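/- arXiv:2503.13201 — 2 statements merged into one kernel-verified Lean document; each statement's English description precedes it below -/
import Mathlib

section
/- Let c > 2 and let φ : ℝ² → ℝ be a smooth, doubly 2π-periodic, symmetric, positive solution of −Δφ + cφ = φ² which minimizes B_c subject to the constraint ∫|u|³ = ∫φ³ (i.e., B_c(φ) ≤ B_c(u) for every smooth, doubly 2π-periodic, symmetric u : ℝ² → ℝ with ∫|u|³ dxdy = ∫φ³ dxdy). Define the quadratic form Q₁(v) = ∫(|∇v|² + c v² − 2φ v²) dxdy associated with 𝓛₁ = −Δ + c − 2φ. Then: (i) Q₁(φ) < 0; and (ii) Q₁ admits no two-dimensional negative subspace, i.e., whenever v, w are smooth, doubly 2π-periodic, symmetric functions such that Q₁(αv + βw) < 0 for every pair of reals (α,β) ≠ (0,0), the functions v and w are linearly dependent. In particular 𝓛₁ has exactly one negative direction. -/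
noncomputable section
open Real MeasureTheory Filter

/-- doubly 2π-periodic -/
def DblPeriodic (u : ℝ → ℝ → ℝ) : Prop :=
  ∀ x y : ℝ, u (x + 2*π) y = u x y ∧ u x (y + 2*π) = u x y

/-- symmetric: even in each variable separately -/
def SymFun (u : ℝ → ℝ → ℝ) : Prop :=
  ∀ x y : ℝ, u (-x) y = u x y ∧ u x (-y) = u x y

/-- smooth as a function on ℝ² -/
def Smooth2 (u : ℝ → ℝ → ℝ) : Prop :=
  ContDiff ℝ (⊤ : ℕ∞) fun p : ℝ × ℝ => u p.1 p.2

/-- the Laplacian Δu = u_xx + u_yy -/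
def lap (u : ℝ → ℝ → ℝ) (x y : ℝ) : ℝ :=
  deriv (fun t => deriv (fun s => u s y) t) x + deriv (fun t => deriv (fun s => u x s) t) y

/-- integral over the fundamental square [0,2π] × [0,2π] -/
def integ2 (f : ℝ → ℝ → ℝ) : ℝ :=
  ∫ x in (0:ℝ)..(2*π), ∫ y in (0:ℝ)..(2*π), f x y

/-- partial derivative in the first variable -/
def pdx (u : ℝ → ℝ → ℝ) (x y : ℝ) : ℝ := deriv (fun s => u s y) x

/-- partial derivative in the second variable -/
def pdy (u : ℝ → ℝ → ℝ) (x y : ℝ) : ℝ := deriv (fun s => u x s) y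

/-- the functional B_c(u) = (1/2)∫(|∇u|² + c u²) dxdy -/
def Bc (c : ℝ) (u : ℝ → ℝ → ℝ) : ℝ :=
  (1/2) * integ2 (fun x y => (pdx u x y)^2 + (pdy u x y)^2 + c * (u x y)^2)

/-- the quadratic form of 𝓛₁ = −Δ + c − 2φ -/
def Qone (c : ℝ) (φ v : ℝ → ℝ → ℝ) : ℝ :=
  integ2 (fun x y =>
    (pdx v x y)^2 + (pdy v x y)^2 + c * (v x y)^2 - 2 * φ x y * (v x y)^2)

/-!
Let `N = ∫φ³`. Testing the equation with `φ` gives `∫(|∇φ|² + cφ²) = N`, so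
`Q₁(φ) = N - 2N < 0`. A two-dimensional space of directions meets the hyperplane `∫φ²h = 0`
nontrivially, so for the second claim it suffices that `Q₁(h) ≥ 0` on that hyperplane.

By homogeneity, minimality of `φ` under the constraint on `∫|u|³` says that the quotient
`B_c(u)³ / (∫|u|³)²` is minimal at `φ`. For `u = φ + th` with `∫φ²h = 0` the terms linear in `t`
vanish from `2B_c(u) = N + t²b` and from `∫|u|³ ≥ ∫u³ = N + 3t²P + t³R`, where
`b = ∫(|∇h|² + ch²)`, `P = ∫φh²` and `R = ∫h³`. Hence `N(N + 3t²P + t³R)² ≤ (N + t²b)³` for small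
`t > 0`, and comparing the terms of order `t²` yields `2P ≤ b`, that is `Q₁(h) ≥ 0`.
-/

open scoped Topology

/-! ### The integral over the square -/

section Integral

variable {f g : ℝ → ℝ → ℝ}

lemma integ2_add (hf : Continuous fun p : ℝ × ℝ => f p.1 p.2)
    (hg : Continuous fun p : ℝ × ℝ => g p.1 p.2) :
    integ2 (fun x y => f x y + g x y) = integ2 f + integ2 g := by
  have inner_add (x : ℝ) : ∫ y in (0 : ℝ)..(2 * π), (f x y + g x y) =
      (∫ y in (0 : ℝ)..(2 * π), f x y) + ∫ y in (0 : ℝ)..(2 * π), g x y :=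
    intervalIntegral.integral_add (Continuous.intervalIntegrable (by fun_prop) _ _)
      (Continuous.intervalIntegrable (by fun_prop) _ _)
  simp only [integ2, inner_add]
  exact intervalIntegral.integral_add (Continuous.intervalIntegrable (by fun_prop) _ _)
    (Continuous.intervalIntegrable (by fun_prop) _ _)

lemma integ2_const_mul (a : ℝ) (f : ℝ → ℝ → ℝ) :
    integ2 (fun x y => a * f x y) = a * integ2 f := by
  simp only [integ2, intervalIntegral.integral_const_mul]

lemma integ2_mono (hf : Continuous fun p : ℝ × ℝ => f p.1 p.2)
    (hg : Continuous fun p : ℝ × ℝ => g p.1 p.2) (hfg : ∀ x y, f x y ≤ g x y) :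
    integ2 f ≤ integ2 g :=
  intervalIntegral.integral_mono two_pi_pos.le
    (Continuous.intervalIntegrable (by fun_prop) _ _)
    (Continuous.intervalIntegrable (by fun_prop) _ _) fun x =>
      intervalIntegral.integral_mono two_pi_pos.le
        (Continuous.intervalIntegrable (by fun_prop) _ _)
        (Continuous.intervalIntegrable (by fun_prop) _ _) (hfg x)

lemma integ2_pos (hf : Continuous fun p : ℝ × ℝ => f p.1 p.2) (hpos : ∀ x y, 0 < f x y) :
    0 < integ2 f :=
  intervalIntegral.intervalIntegral_pos_of_pos
    (Continuous.intervalIntegrable (by fun_prop) _ _)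
    (fun x => intervalIntegral.intervalIntegral_pos_of_pos
      (Continuous.intervalIntegrable (by fun_prop) _ _) (hpos x) two_pi_pos) two_pi_pos

lemma integ2_flip (hf : Continuous fun p : ℝ × ℝ => f p.1 p.2) :
    integ2 (flip f) = integ2 f := by
  have integrable : IntegrableOn (Function.uncurry f)
      (Set.uIcc 0 (2 * π) ×ˢ Set.uIcc 0 (2 * π)) :=
    hf.continuousOn.integrableOn_compact (isCompact_uIcc.prod isCompact_uIcc)
  exact (intervalIntegral_intervalIntegral_swap <| integrable.mono_set <|
    Set.prod_mono Set.uIoc_subset_uIcc Set.uIoc_subset_uIcc).symm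

lemma integ2_abs_const_mul_pow_three {a : ℝ} (ha : 0 ≤ a) (f : ℝ → ℝ → ℝ) :
    integ2 (fun x y => |a * f x y| ^ 3) = a ^ 3 * integ2 (fun x y => |f x y| ^ 3) := by
  simp only [abs_mul, abs_of_nonneg ha, mul_pow, integ2_const_mul]

lemma integ2_pow_three_le_integ2_abs_pow_three
    (hf : Continuous fun p : ℝ × ℝ => f p.1 p.2) :
    integ2 (fun x y => f x y ^ 3) ≤ integ2 (fun x y => |f x y| ^ 3) :=
  integ2_mono (by fun_prop) (by fun_prop) fun x y => by
    rw [← abs_pow]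
    exact le_abs_self _

lemma integ2_add_const_mul_pow_three (hf : Continuous fun p : ℝ × ℝ => f p.1 p.2)
    (hg : Continuous fun p : ℝ × ℝ => g p.1 p.2) (t : ℝ) :
    integ2 (fun x y => (f x y + t * g x y) ^ 3) =
      integ2 (fun x y => f x y ^ 3) + 3 * t * integ2 (fun x y => f x y ^ 2 * g x y) +
        3 * t ^ 2 * integ2 (fun x y => f x y * g x y ^ 2) +
        t ^ 3 * integ2 (fun x y => g x y ^ 3) := by
  have cube_eq (x y : ℝ) : (f x y + t * g x y) ^ 3 =
      f x y ^ 3 + 3 * t * (f x y ^ 2 * g x y) + 3 * t ^ 2 * (f x y * g x y ^ 2) +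
        t ^ 3 * g x y ^ 3 := by ring
  simp only [cube_eq]
  simp (disch := fun_prop) only [integ2_add, integ2_const_mul]

end Integral

/-! ### Partial derivatives -/

section PartialDerivatives

variable {u v : ℝ → ℝ → ℝ}

lemma Smooth2.continuous (hu : Smooth2 u) : Continuous fun p : ℝ × ℝ => u p.1 p.2 :=
  ContDiff.continuous hu

lemma Smooth2.flip (hu : Smooth2 u) : Smooth2 (flip u) :=
  ContDiff.comp hu (contDiff_snd.prodMk contDiff_fst)

-- `deriv f x` unfolds to `fderiv ℝ f x 1`.
lemma Smooth2.pdx (hu : Smooth2 u) : Smooth2 (pdx u) :=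
  ContDiff.fderiv_apply (f := fun (p : ℝ × ℝ) s => u s p.2)
    (ContDiff.comp hu (contDiff_snd.prodMk (contDiff_snd.comp contDiff_fst)))
    contDiff_fst contDiff_const le_rfl

-- `pdy u` unfolds to `flip (pdx (flip u))`, so facts about `pdy` follow from those about `pdx`.
lemma Smooth2.pdy (hu : Smooth2 u) : Smooth2 (pdy u) := hu.flip.pdx.flip

lemma Smooth2.hasDerivAt_pdx (hu : Smooth2 u) (x y : ℝ) :
    HasDerivAt (fun s => u s y) (_root_.pdx u x y) x :=
  have slice : ContDiff ℝ (⊤ : ℕ∞) fun s => u s y :=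
    ContDiff.comp hu (contDiff_id.prodMk contDiff_const)
  (slice.differentiable (by simp) x).hasDerivAt

lemma Smooth2.hasDerivAt_pdy (hu : Smooth2 u) (x y : ℝ) :
    HasDerivAt (fun s => u x s) (_root_.pdy u x y) y :=
  hu.flip.hasDerivAt_pdx y x

lemma pdx_add_const_mul (hu : Smooth2 u) (hv : Smooth2 v) (t x y : ℝ) :
    pdx (fun x y => u x y + t * v x y) x y = pdx u x y + t * pdx v x y :=
  ((hu.hasDerivAt_pdx x y).add ((hv.hasDerivAt_pdx x y).const_mul t)).deriv

lemma pdy_add_const_mul (hu : Smooth2 u) (hv : Smooth2 v) (t x y : ℝ) :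
    pdy (fun x y => u x y + t * v x y) x y = pdy u x y + t * pdy v x y :=
  pdx_add_const_mul hu.flip hv.flip t y x

lemma DblPeriodic.flip (hu : DblPeriodic u) : DblPeriodic (flip u) :=
  fun x y => (hu y x).symm

lemma DblPeriodic.pdx (hu : DblPeriodic u) : DblPeriodic (pdx u) := fun x y => by
  refine ⟨?_, ?_⟩
  · simp only [_root_.pdx, ← deriv_comp_add_const, (hu _ y).1]
  · simp only [_root_.pdx, (hu _ y).2]

lemma DblPeriodic.pdy (hu : DblPeriodic u) : DblPeriodic (pdy u) := hu.flip.pdx.flip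

lemma integ2_mul_pdy (hu : Smooth2 u) (hv : Smooth2 v) (pu : DblPeriodic u)
    (pv : DblPeriodic v) :
    integ2 (fun x y => u x y * pdy v x y) = -integ2 (fun x y => pdy u x y * v x y) := by
  have cu := hu.pdy.continuous
  have cv := hv.pdy.continuous
  simp only [integ2, ← intervalIntegral.integral_neg]
  congr 1 with x
  have endpoint_u : u x (2 * π) = u x 0 := by simpa using (pu x 0).2
  have endpoint_v : v x (2 * π) = v x 0 := by simpa using (pv x 0).2
  rw [intervalIntegral.integral_mul_deriv_eq_deriv_mul (fun y _ => hu.hasDerivAt_pdy x y)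
    (fun y _ => hv.hasDerivAt_pdy x y) (Continuous.intervalIntegrable (by fun_prop) _ _)
    (Continuous.intervalIntegrable (by fun_prop) _ _), endpoint_u, endpoint_v]
  simp

lemma integ2_mul_pdx (hu : Smooth2 u) (hv : Smooth2 v) (pu : DblPeriodic u)
    (pv : DblPeriodic v) :
    integ2 (fun x y => u x y * pdx v x y) = -integ2 (fun x y => pdx u x y * v x y) := by
  have cu := hu.continuous
  have cv := hv.continuous
  have cux := hu.pdx.continuous
  have cvx := hv.pdx.continuous
  calc integ2 (fun x y => u x y * pdx v x y)
      = integ2 (flip fun x y => u x y * pdx v x y) := (integ2_flip (by fun_prop)).symm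
    _ = -integ2 (flip fun x y => pdx u x y * v x y) :=
        integ2_mul_pdy hu.flip hv.flip pu.flip pv.flip
    _ = -integ2 (fun x y => pdx u x y * v x y) := by rw [integ2_flip (by fun_prop)]

end PartialDerivatives

/-! ### The energy form -/

/-- The symmetric bilinear form `∫(∇u · ∇v + c u v)` polarizing `2 B_c`. -/
def energyForm (c : ℝ) (u v : ℝ → ℝ → ℝ) : ℝ :=
  integ2 fun x y => pdx u x y * pdx v x y + pdy u x y * pdy v x y + c * (u x y * v x y)

section EnergyForm

variable {u v φ : ℝ → ℝ → ℝ}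

lemma Bc_eq_energyForm (c : ℝ) (u : ℝ → ℝ → ℝ) : Bc c u = 1 / 2 * energyForm c u u := by
  simp only [Bc, energyForm, pow_two]

lemma Bc_const_mul (c a : ℝ) (u : ℝ → ℝ → ℝ) :
    Bc c (fun x y => a * u x y) = a ^ 2 * Bc c u := by
  simp only [Bc, pdx, pdy, deriv_const_mul_field, mul_left_comm (a ^ 2), ← integ2_const_mul]
  congr 2 with x y
  ring

lemma energyForm_eq_integ2_mul (c : ℝ) (hu : Smooth2 u) (hv : Smooth2 v) (pu : DblPeriodic u)
    (pv : DblPeriodic v) :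
    energyForm c u v = integ2 fun x y => (-(lap u x y) + c * u x y) * v x y := by
  have cu := hu.continuous
  have cv := hv.continuous
  have cux := hu.pdx.continuous
  have cuy := hu.pdy.continuous
  have cvx := hv.pdx.continuous
  have cvy := hv.pdy.continuous
  have cuxx := hu.pdx.pdx.continuous
  have cuyy := hu.pdy.pdy.continuous
  have integrand_eq (x y : ℝ) : (-(lap u x y) + c * u x y) * v x y =
      -1 * (pdx (pdx u) x y * v x y) + -1 * (pdy (pdy u) x y * v x y) + c * (u x y * v x y) := by
    simp only [lap, pdx, pdy]
    ring
  simp only [integrand_eq, energyForm]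
  simp (disch := fun_prop) only [integ2_add, integ2_const_mul]
  rw [integ2_mul_pdx hu.pdx hv pu.pdx pv, integ2_mul_pdy hu.pdy hv pu.pdy pv, neg_one_mul,
    neg_one_mul]

lemma energyForm_add_const_mul_self (c : ℝ) (hu : Smooth2 u) (hv : Smooth2 v) (t : ℝ) :
    energyForm c (fun x y => u x y + t * v x y) (fun x y => u x y + t * v x y) =
      energyForm c u u + 2 * t * energyForm c u v + t ^ 2 * energyForm c v v := by
  have cu := hu.continuous
  have cv := hv.continuous
  have cux := hu.pdx.continuous
  have cuy := hu.pdy.continuous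
  have cvx := hv.pdx.continuous
  have cvy := hv.pdy.continuous
  simp only [energyForm, ← integ2_const_mul]
  simp (disch := fun_prop) only [← integ2_add]
  congr 1 with x y
  rw [pdx_add_const_mul hu hv, pdy_add_const_mul hu hv]
  ring

lemma Qone_eq_energyForm_sub (c : ℝ) (hφ : Continuous fun p : ℝ × ℝ => φ p.1 p.2)
    (hv : Smooth2 v) :
    Qone c φ v = energyForm c v v - 2 * integ2 (fun x y => φ x y * v x y ^ 2) := by
  have cv := hv.continuous
  have cvx := hv.pdx.continuous
  have cvy := hv.pdy.continuous
  rw [sub_eq_add_neg, ← neg_mul, ← integ2_const_mul, energyForm,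
    ← integ2_add (by fun_prop) (by fun_prop), Qone]
  congr 1 with x y
  ring

end EnergyForm

/-! ### Constrained minimizers -/

/-- `φ` minimizes `B_c` among the `u ∈ V` with `∫|u|³ = ∫φ³`, a constraint that `φ` itself
meets when `φ ≥ 0`. The space `V` of admissible functions is a parameter, so that periodicity and
symmetry enter only as properties of `V`. -/
def IsConstrainedMinimizer (V : Submodule ℝ (ℝ → ℝ → ℝ)) (c : ℝ) (φ : ℝ → ℝ → ℝ) : Prop :=
  ∀ u ∈ V, integ2 (fun x y => |u x y| ^ 3) = integ2 (fun x y => φ x y ^ 3) → Bc c φ ≤ Bc c u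

section Minimizer

variable {V : Submodule ℝ (ℝ → ℝ → ℝ)} {c : ℝ} {φ u h : ℝ → ℝ → ℝ}

-- The homogeneous form of minimality, obtained by rescaling `u` to satisfy the constraint.
lemma IsConstrainedMinimizer.Bc_pow_three_mul_le (hmin : IsConstrainedMinimizer V c φ)
    (hN : 0 ≤ integ2 fun x y => φ x y ^ 3) (hB : 0 ≤ Bc c φ) (hu : u ∈ V)
    (hD : 0 < integ2 fun x y => |u x y| ^ 3) :
    Bc c φ ^ 3 * integ2 (fun x y => |u x y| ^ 3) ^ 2 ≤
      Bc c u ^ 3 * integ2 (fun x y => φ x y ^ 3) ^ 2 := by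
  set N := integ2 fun x y => φ x y ^ 3
  set D := integ2 fun x y => |u x y| ^ 3
  obtain ⟨s, s_nonneg, s_cubed⟩ : ∃ s : ℝ, 0 ≤ s ∧ s ^ 3 = N / D :=
    ⟨(N / D) ^ ((3 : ℕ)⁻¹ : ℝ), by positivity, rpow_inv_natCast_pow (by positivity) three_ne_zero⟩
  have s_cubed_mul : s ^ 3 * D = N := by rw [s_cubed, div_mul_cancel₀ N hD.ne']
  have le_rescaled : Bc c φ ≤ s ^ 2 * Bc c u := by
    rw [← Bc_const_mul]
    exact hmin _ (V.smul_mem s hu) ((integ2_abs_const_mul_pow_three s_nonneg u).trans s_cubed_mul)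
  calc Bc c φ ^ 3 * D ^ 2 ≤ (s ^ 2 * Bc c u) ^ 3 * D ^ 2 := by gcongr
    _ = Bc c u ^ 3 * (s ^ 3 * D) ^ 2 := by ring
    _ = Bc c u ^ 3 * N ^ 2 := by rw [s_cubed_mul]

lemma IsConstrainedMinimizer.mul_sq_le_energyForm_pow_three (hmin : IsConstrainedMinimizer V c φ)
    (hE : energyForm c φ φ = integ2 fun x y => φ x y ^ 3)
    (hN : 0 < integ2 fun x y => φ x y ^ 3) (hu : u ∈ V)
    (cu : Continuous fun p : ℝ × ℝ => u p.1 p.2) (hD : 0 < integ2 fun x y => u x y ^ 3) :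
    integ2 (fun x y => φ x y ^ 3) * integ2 (fun x y => u x y ^ 3) ^ 2 ≤
      energyForm c u u ^ 3 := by
  have cube_le_abs := integ2_pow_three_le_integ2_abs_pow_three cu
  have Bc_nonneg : 0 ≤ Bc c φ := by rw [Bc_eq_energyForm, hE]; positivity
  have quotient_le := hmin.Bc_pow_three_mul_le hN.le Bc_nonneg hu (hD.trans_le cube_le_abs)
  rw [Bc_eq_energyForm, Bc_eq_energyForm, hE] at quotient_le
  set N := integ2 fun x y => φ x y ^ 3
  set A := integ2 fun x y => |u x y| ^ 3
  calc N * integ2 (fun x y => u x y ^ 3) ^ 2 ≤ N * A ^ 2 := by gcongr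
    _ ≤ energyForm c u u ^ 3 := by
      refine le_of_mul_le_mul_left ?_ (pow_pos hN 2)
      linarith

lemma two_mul_le_of_eventually_mul_sq_le_pow_three {N P R b : ℝ} (hN : 0 < N)
    (hle : ∀ᶠ t in 𝓝[>] (0 : ℝ),
      N * (N + 3 * t ^ 2 * P + t ^ 3 * R) ^ 2 ≤ (N + t ^ 2 * b) ^ 3) :
    2 * P ≤ b := by
  have order_two : ∀ᶠ t in 𝓝[>] (0 : ℝ),
      6 * N ^ 2 * P + 2 * N ^ 2 * t * R ≤
        3 * N ^ 2 * b + 3 * N * t ^ 2 * b ^ 2 + t ^ 4 * b ^ 3 := by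
    filter_upwards [hle, self_mem_nhdsWithin] with t ht (t_pos : 0 < t)
    have remainder_nonneg : 0 ≤ N * (3 * t ^ 2 * P + t ^ 3 * R) ^ 2 := by positivity
    refine le_of_mul_le_mul_left ?_ (pow_pos t_pos 2)
    linarith
  have lim_le : 6 * N ^ 2 * P ≤ 3 * N ^ 2 * b := by
    refine le_of_tendsto_of_tendsto ?_ ?_ order_two <;>
      refine (Continuous.tendsto' ?_ _ _ ?_).mono_left nhdsWithin_le_nhds
    all_goals first | fun_prop | simp
  refine le_of_mul_le_mul_left ?_ (show 0 < 3 * N ^ 2 by positivity)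
  linarith

lemma energyForm_eq_integ2_sq_mul (hφ : Smooth2 φ) (hh : Smooth2 h) (pφ : DblPeriodic φ)
    (ph : DblPeriodic h) (heq : ∀ x y, -(lap φ x y) + c * φ x y = φ x y ^ 2) :
    energyForm c φ h = integ2 fun x y => φ x y ^ 2 * h x y := by
  simp only [energyForm_eq_integ2_mul c hφ hh pφ ph, heq]

lemma energyForm_self_eq_integ2_pow_three (hφ : Smooth2 φ) (pφ : DblPeriodic φ)
    (heq : ∀ x y, -(lap φ x y) + c * φ x y = φ x y ^ 2) :
    energyForm c φ φ = integ2 fun x y => φ x y ^ 3 := by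
  simp only [energyForm_eq_integ2_sq_mul hφ hφ pφ pφ heq, ← pow_succ]

lemma Qone_self_eq_neg (hφ : Smooth2 φ) (pφ : DblPeriodic φ)
    (heq : ∀ x y, -(lap φ x y) + c * φ x y = φ x y ^ 2) :
    Qone c φ φ = -integ2 fun x y => φ x y ^ 3 := by
  rw [Qone_eq_energyForm_sub c hφ.continuous hφ, energyForm_self_eq_integ2_pow_three hφ pφ heq]
  simp only [← pow_succ']
  ring

theorem IsConstrainedMinimizer.Qone_nonneg_of_integ2_sq_mul_eq_zero
    (hmin : IsConstrainedMinimizer V c φ)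
    (hV : ∀ u ∈ V, Smooth2 u ∧ DblPeriodic u) (hφ : φ ∈ V)
    (hN : 0 < integ2 fun x y => φ x y ^ 3)
    (heq : ∀ x y, -(lap φ x y) + c * φ x y = φ x y ^ 2) (hh : h ∈ V)
    (htan : integ2 (fun x y => φ x y ^ 2 * h x y) = 0) :
    0 ≤ Qone c φ h := by
  obtain ⟨sφ, pφ⟩ := hV φ hφ
  obtain ⟨sh, ph⟩ := hV h hh
  have energy_self := energyForm_self_eq_integ2_pow_three sφ pφ heq
  have energy_line (t : ℝ) := energyForm_add_const_mul_self c sφ sh t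
  have cube_line (t : ℝ) := integ2_add_const_mul_pow_three sφ.continuous sh.continuous t
  have line_mem (t : ℝ) : (fun x y => φ x y + t * h x y) ∈ V := V.add_mem hφ (V.smul_mem t hh)
  simp only [energyForm_eq_integ2_sq_mul sφ sh pφ ph heq, htan, mul_zero, add_zero, energy_self]
    at energy_line cube_line
  rw [Qone_eq_energyForm_sub c sφ.continuous sh, sub_nonneg]
  set N := integ2 fun x y => φ x y ^ 3
  set P := integ2 fun x y => φ x y * h x y ^ 2
  set R := integ2 fun x y => h x y ^ 3
  set b := energyForm c h h
  have cube_pos : ∀ᶠ t in 𝓝[>] (0 : ℝ), 0 < N + 3 * t ^ 2 * P + t ^ 3 * R :=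
    nhdsWithin_le_nhds <| (Continuous.tendsto' (by fun_prop) 0 N (by simp)).eventually_const_lt hN
  refine two_mul_le_of_eventually_mul_sq_le_pow_three (R := R) hN ?_
  filter_upwards [cube_pos] with t ht
  rw [← cube_line] at ht ⊢
  rw [← energy_line]
  exact hmin.mul_sq_le_energyForm_pow_three energy_self hN (line_mem t)
    (hV _ (line_mem t)).1.continuous ht

end Minimizer

lemma exists_mul_add_mul_eq_zero {R : Type*} [CommRing R] [Nontrivial R] (a b : R) :
    ∃ α β : R, ¬(α = 0 ∧ β = 0) ∧ α * a + β * b = 0 := by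
  by_cases ha : a = 0
  · exact ⟨1, 0, by simp, by simp [ha]⟩
  · exact ⟨-b, a, fun h => ha h.2, by ring⟩

theorem Lone_one_negative_direction_general {V : Submodule ℝ (ℝ → ℝ → ℝ)} {c : ℝ}
    {φ : ℝ → ℝ → ℝ} (hmin : IsConstrainedMinimizer V c φ)
    (hV : ∀ u ∈ V, Smooth2 u ∧ DblPeriodic u) (hφ : φ ∈ V)
    (hN : 0 < integ2 fun x y => φ x y ^ 3)
    (heq : ∀ x y, -(lap φ x y) + c * φ x y = φ x y ^ 2) :
    Qone c φ φ < 0 ∧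
    ∀ v ∈ V, ∀ w ∈ V,
      (∀ α β : ℝ, ¬(α = 0 ∧ β = 0) → Qone c φ (fun x y => α * v x y + β * w x y) < 0) →
      ∃ α β : ℝ, ¬(α = 0 ∧ β = 0) ∧ ∀ x y : ℝ, α * v x y + β * w x y = 0 := by
  obtain ⟨sφ, pφ⟩ := hV φ hφ
  refine ⟨by rwa [Qone_self_eq_neg sφ pφ heq, neg_lt_zero], fun v hv w hw hneg => ?_⟩
  have cφ := sφ.continuous
  have cv := (hV v hv).1.continuous
  have cw := (hV w hw).1.continuous
  obtain ⟨α, β, hne, hzero⟩ := exists_mul_add_mul_eq_zero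
    (integ2 fun x y => φ x y ^ 2 * v x y) (integ2 fun x y => φ x y ^ 2 * w x y)
  have tangent : integ2 (fun x y => φ x y ^ 2 * (α * v x y + β * w x y)) = 0 := by
    simp only [mul_add, mul_left_comm _ α, mul_left_comm _ β]
    simp (disch := fun_prop) only [integ2_add, integ2_const_mul, hzero]
  have nonneg := hmin.Qone_nonneg_of_integ2_sq_mul_eq_zero hV hφ hN heq
    (V.add_mem (V.smul_mem α hv) (V.smul_mem β hw)) tangent
  exact absurd (hneg α β hne) nonneg.not_gt

/-- The space of smooth, doubly `2π`-periodic, symmetric functions, in which the paper's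
minimization takes place. -/
def smoothPeriodicSymm : Submodule ℝ (ℝ → ℝ → ℝ) where
  carrier := {u | Smooth2 u ∧ DblPeriodic u ∧ SymFun u}
  zero_mem' := ⟨contDiff_const, fun _ _ => ⟨rfl, rfl⟩, fun _ _ => ⟨rfl, rfl⟩⟩
  add_mem' := fun ⟨su, pu, eu⟩ ⟨sv, pv, ev⟩ =>
    ⟨ContDiff.add su sv, fun x y => by simp [pu x y, pv x y], fun x y => by simp [eu x y, ev x y]⟩
  smul_mem' := fun _ _ ⟨su, pu, eu⟩ =>
    ⟨contDiff_const.mul su, fun x y => by simp [pu x y], fun x y => by simp [eu x y]⟩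

/-- For a positive constrained minimizer φ of B_c (c > 2) solving −Δφ + cφ = φ²:
Q₁(φ) < 0, and Q₁ admits no two-dimensional negative subspace, i.e. 𝓛₁ has exactly
one negative direction. -/
theorem Lone_one_negative_direction (c : ℝ) (hc : 2 < c) (φ : ℝ → ℝ → ℝ)
    (hs : Smooth2 φ) (hper : DblPeriodic φ) (hsym : SymFun φ)
    (hpos : ∀ x y : ℝ, 0 < φ x y)
    (heq : ∀ x y : ℝ, -(lap φ x y) + c * φ x y = (φ x y)^2)
    (hmin : ∀ u : ℝ → ℝ → ℝ, Smooth2 u → DblPeriodic u → SymFun u →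
      integ2 (fun x y => |u x y|^3) = integ2 (fun x y => (φ x y)^3) →
      Bc c φ ≤ Bc c u) :
    Qone c φ φ < 0 ∧
    ∀ v w : ℝ → ℝ → ℝ, Smooth2 v → DblPeriodic v → SymFun v →
      Smooth2 w → DblPeriodic w → SymFun w →
      (∀ α β : ℝ, ¬(α = 0 ∧ β = 0) →
        Qone c φ (fun x y => α * v x y + β * w x y) < 0) →
      ∃ α β : ℝ, ¬(α = 0 ∧ β = 0) ∧ ∀ x y : ℝ, α * v x y + β * w x y = 0 := by
  have hN : 0 < integ2 fun x y => φ x y ^ 3 :=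
    integ2_pos (hs.continuous.pow 3) fun x y => pow_pos (hpos x y) 3
  obtain ⟨hself, hdep⟩ := Lone_one_negative_direction_general (V := smoothPeriodicSymm)
    (fun u hu => hmin u hu.1 hu.2.1 hu.2.2) (fun u hu => ⟨hu.1, hu.2.1⟩) ⟨hs, hper, hsym⟩ hN heq
  exact ⟨hself, fun v w sv pv ev sw pw ew => hdep v ⟨sv, pv, ev⟩ w ⟨sw, pw, ew⟩⟩
end
end

section
/- Let u : ℝ² → ℝ be a smooth, doubly 2π-periodic, symmetric function satisfying Δu + 2u = 0 on ℝ². Then there exists a real number α such that u(x,y) = α cos(x)cos(y) for all (x,y) ∈ ℝ²; that is, the kernel of −Δ − 2 in the class of symmetric doubly 2π-periodic functions is one dimensional, spanned by cos(x)cos(y). -/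
noncomputable section
open Real

/-!
On the torus, the functions `cos (m x) cos (n y)` form a complete orthogonal system for the
functions that are even in each variable, and integrating by parts shows that `Δ` multiplies the
coefficient of index `(m, n)` by `-(m² + n²)`. A solution of `Δu + λu = 0` therefore has only the
coefficients with `m² + n² = λ`. For `λ = 2` the sole such index is `(1, 1)`.
-/

open Function

section Differentiation

variable {𝕜 E F G : Type*} [NontriviallyNormedField 𝕜] [NormedAddCommGroup E] [NormedSpace 𝕜 E]
  [NormedAddCommGroup F] [NormedSpace 𝕜 F] [NormedAddCommGroup G] [NormedSpace 𝕜 G]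
  {n : WithTop ℕ∞}

theorem periodic_deriv {f : 𝕜 → F} {T : 𝕜} (hf : Periodic f T) : Periodic (deriv f) T :=
  fun x => by rw [← deriv_comp_add_const, funext hf]

theorem contDiff_uncurry_flip {f : E → F → G} (hf : ContDiff 𝕜 n (uncurry f)) :
    ContDiff 𝕜 n (uncurry (flip f)) :=
  hf.comp (contDiff_snd.prodMk contDiff_fst)

theorem contDiff_uncurry_deriv_snd {f : E → 𝕜 → F} (hf : ContDiff 𝕜 (n + 1) (uncurry f)) :
    ContDiff 𝕜 n (uncurry fun x y => deriv (f x) y) := by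
  have hcomp : ContDiff 𝕜 (n + 1) (uncurry fun p : E × 𝕜 => f p.1) :=
    hf.comp ((contDiff_fst.comp contDiff_fst).prodMk contDiff_snd)
  exact hcomp.fderiv_apply contDiff_snd contDiff_const le_rfl

theorem continuous_uncurry_deriv_deriv_snd {f : E → 𝕜 → F} (hf : ContDiff 𝕜 2 (uncurry f)) :
    Continuous (uncurry fun x y => deriv (deriv (f x)) y) := by
  have hf' : ContDiff 𝕜 1 (uncurry fun x y => deriv (f x) y) := contDiff_uncurry_deriv_snd hf
  exact (contDiff_uncurry_deriv_snd (n := 0) hf').continuous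

end Differentiation

section Periodic

variable {f g : ℝ → ℝ} {T : ℝ}

theorem integral_deriv_mul_of_periodic (hf : ContDiff ℝ 1 f) (hg : ContDiff ℝ 1 g)
    (hfT : Periodic f T) (hgT : Periodic g T) (a : ℝ) :
    ∫ x in a..a + T, deriv f x * g x = -∫ x in a..a + T, f x * deriv g x := by
  have hparts := intervalIntegral.integral_mul_deriv_eq_deriv_mul (a := a) (b := a + T)
    (fun x _ => (hf.differentiable one_ne_zero x).hasDerivAt)
    (fun x _ => (hg.differentiable one_ne_zero x).hasDerivAt)
    (hf.continuous_deriv_one.intervalIntegrable _ _)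
    (hg.continuous_deriv_one.intervalIntegrable _ _)
  rw [hfT, hgT] at hparts
  linarith

theorem integral_deriv_deriv_mul_of_periodic (hf : ContDiff ℝ 2 f) (hg : ContDiff ℝ 2 g)
    (hfT : Periodic f T) (hgT : Periodic g T) (a : ℝ) :
    ∫ x in a..a + T, deriv (deriv f) x * g x = ∫ x in a..a + T, f x * deriv (deriv g) x := by
  have hf' : ContDiff ℝ 1 (deriv f) := hf.deriv'
  have hg' : ContDiff ℝ 1 (deriv g) := hg.deriv'
  rw [integral_deriv_mul_of_periodic hf' (hg.of_le one_le_two) (periodic_deriv hfT) hgT,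
    integral_deriv_mul_of_periodic (hf.of_le one_le_two) hg' hfT (periodic_deriv hgT), neg_neg]

end Periodic

section Cosine

theorem periodic_cos_nat_mul (n : ℕ) : Periodic (fun x => cos (n * x)) (2 * π) := fun x => by
  simp only [mul_add, cos_add_nat_mul_two_pi]

theorem even_cos_const_mul (c : ℝ) : Function.Even fun x => cos (c * x) := fun x => by
  simp only [mul_neg, cos_neg]

theorem deriv_deriv_cos_const_mul (c : ℝ) :
    deriv (deriv fun x => cos (c * x)) = fun x => -c ^ 2 * cos (c * x) := by
  have hderiv : deriv (fun x => cos (c * x)) = fun x => -c * sin (c * x) := by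
    ext x
    simp [deriv_comp_mul_left]
  ext x
  rw [hderiv, deriv_const_mul_field, deriv_comp_mul_left, Real.deriv_sin, smul_eq_mul]
  ring

theorem integral_deriv_deriv_mul_cos {f : ℝ → ℝ} (hf : ContDiff ℝ 2 f)
    (hper : Periodic f (2 * π)) (n : ℕ) :
    ∫ x in (-π)..π, deriv (deriv f) x * cos (n * x) =
      -(n : ℝ) ^ 2 * ∫ x in (-π)..π, f x * cos (n * x) := by
  have hparts := integral_deriv_deriv_mul_of_periodic hf
    (by fun_prop : ContDiff ℝ 2 fun x => cos (n * x)) hper (periodic_cos_nat_mul n) (-π)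
  rw [show -π + 2 * π = π by ring, deriv_deriv_cos_const_mul] at hparts
  simp_rw [hparts, mul_left_comm (f _), intervalIntegral.integral_const_mul]

theorem integral_cos_mul_cos_of_ne {m n : ℕ} (hmn : m ≠ n) :
    ∫ x in (-π)..π, cos (m * x) * cos (n * x) = 0 := by
  have heigen := integral_deriv_deriv_mul_cos
    (by fun_prop : ContDiff ℝ 2 fun x => cos (m * x)) (periodic_cos_nat_mul m) n
  simp_rw [deriv_deriv_cos_const_mul, mul_assoc, intervalIntegral.integral_const_mul] at heigen
  have hsq : -(m : ℝ) ^ 2 ≠ -(n : ℝ) ^ 2 := by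
    rw [Ne, neg_inj, sq_eq_sq₀ m.cast_nonneg n.cast_nonneg]
    exact_mod_cast hmn
  exact (mul_eq_mul_right_iff.mp heigen).resolve_left hsq

theorem integral_cos_mul_self_pos (c : ℝ) : 0 < ∫ x in (-π)..π, cos (c * x) * cos (c * x) :=
  intervalIntegral.integral_pos (by linarith [pi_pos]) (by fun_prop)
    (fun x _ => mul_self_nonneg _) ⟨0, by simp [pi_nonneg], by simp⟩

end Cosine

section Completeness

theorem eq_zero_of_fourierCoeff_eq_zero {T : ℝ} [Fact (0 < T)] {F : C(AddCircle T, ℂ)}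
    (hF : ∀ n, fourierCoeff F n = 0) : F = 0 := by
  have hsum : HasSum (fun n => fourierCoeff F n • fourier n) F :=
    hasSum_fourier_series_of_summable (by simpa only [funext hF] using summable_zero)
  simp only [hF, zero_smul] at hsum
  exact hsum.unique hasSum_zero

theorem integral_eq_zero_of_odd {E : Type*} [NormedAddCommGroup E] [NormedSpace ℝ E]
    {f : ℝ → E} (hf : Function.Odd f) (a : ℝ) : ∫ x in (-a)..a, f x = 0 := by
  have hneg := intervalIntegral.integral_comp_neg (a := -a) (b := a) f
  simp only [hf _, neg_neg, intervalIntegral.integral_neg] at hneg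
  have : IsAddTorsionFree E := .of_isTorsionFree ℝ E
  exact self_eq_neg.mp hneg.symm

variable {f : ℝ → ℝ}

theorem fourier_neg_smul_ofReal (n : ℤ) (x r : ℝ) :
    fourier (-n) (x : AddCircle (2 * π)) • (r : ℂ) =
      ((r * cos (n * x) : ℝ) : ℂ) - ((r * sin (n * x) : ℝ) : ℂ) * Complex.I := by
  have hexponent : 2 * π * Complex.I * ((-n : ℤ) : ℂ) * x / ((2 * π : ℝ) : ℂ) =
      ((-(n * x) : ℝ) : ℂ) * Complex.I := by
    have : (π : ℂ) ≠ 0 := by exact_mod_cast pi_ne_zero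
    push_cast
    field_simp
  rw [fourier_coe_apply, hexponent, Complex.exp_mul_I, ← Complex.ofReal_cos,
    ← Complex.ofReal_sin, cos_neg, sin_neg, smul_eq_mul]
  push_cast
  ring

theorem fourierCoeff_lift_of_even [Fact (0 < 2 * π)] (hf : Continuous f)
    (heven : Function.Even f) (hper : Periodic (fun x => (f x : ℂ)) (2 * π)) (n : ℤ) :
    fourierCoeff hper.lift n =
      (1 / (2 * π)) • ((∫ x in (-π)..π, f x * cos (n * x) : ℝ) : ℂ) := by
  have hsin : ∫ x in (-π)..π, f x * sin (n * x) = 0 :=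
    integral_eq_zero_of_odd (fun x => by simp [heven x]) π
  rw [fourierCoeff_eq_intervalIntegral _ n (-π), show -π + 2 * π = π by ring]
  simp_rw [hper.lift_coe, fourier_neg_smul_ofReal]
  rw [intervalIntegral.integral_sub, intervalIntegral.integral_mul_const,
    intervalIntegral.integral_ofReal, intervalIntegral.integral_ofReal, hsin,
    Complex.ofReal_zero, zero_mul, sub_zero]
  all_goals exact Continuous.intervalIntegrable (by fun_prop) _ _

theorem eq_zero_of_integral_mul_cos_eq_zero (hf : Continuous f) (hper : Periodic f (2 * π))
    (heven : Function.Even f) (hcos : ∀ n : ℕ, ∫ x in (-π)..π, f x * cos (n * x) = 0) :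
    f = 0 := by
  have : Fact (0 < 2 * π) := ⟨two_pi_pos⟩
  have hperC : Periodic (fun x => (f x : ℂ)) (2 * π) := fun x => congrArg _ (hper x)
  let F : C(AddCircle (2 * π), ℂ) :=
    ⟨hperC.lift, continuous_coinduced_dom.mpr (Complex.continuous_ofReal.comp hf)⟩
  have hcosZ (n : ℤ) : ∫ x in (-π)..π, f x * cos (n * x) = 0 := by
    obtain ⟨k, rfl | rfl⟩ := n.eq_nat_or_neg <;> simpa using hcos k
  have hF : F = 0 := eq_zero_of_fourierCoeff_eq_zero fun n => by
    change fourierCoeff hperC.lift n = 0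
    rw [fourierCoeff_lift_of_even hf heven hperC, hcosZ, Complex.ofReal_zero, smul_zero]
  ext x
  exact Complex.ofReal_eq_zero.mp (DFunLike.congr_fun hF (x : AddCircle (2 * π)))

end Completeness

section Symmetry

variable {u v : ℝ → ℝ → ℝ}

theorem DblPeriodic.sub (hu : DblPeriodic u) (hv : DblPeriodic v) : DblPeriodic (u - v) :=
  fun x y => ⟨congrArg₂ (· - ·) (hu x y).1 (hv x y).1, congrArg₂ (· - ·) (hu x y).2 (hv x y).2⟩

theorem DblPeriodic.const_smul (hu : DblPeriodic u) (c : ℝ) : DblPeriodic (c • u) :=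
  fun x y => ⟨congrArg (c * ·) (hu x y).1, congrArg (c * ·) (hu x y).2⟩

theorem SymFun.sub (hu : SymFun u) (hv : SymFun v) : SymFun (u - v) :=
  fun x y => ⟨congrArg₂ (· - ·) (hu x y).1 (hv x y).1, congrArg₂ (· - ·) (hu x y).2 (hv x y).2⟩

theorem SymFun.const_smul (hu : SymFun u) (c : ℝ) : SymFun (c • u) :=
  fun x y => ⟨congrArg (c * ·) (hu x y).1, congrArg (c * ·) (hu x y).2⟩

end Symmetry

/-- The function `cos (m x) cos (n y)`, the eigenfunction of `-Δ` on the torus `(ℝ / 2πℤ)²` with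
eigenvalue `m² + n²` that is even in each variable. -/
def cosMode (m n : ℕ) (x y : ℝ) : ℝ := cos (m * x) * cos (n * y)

/-- The cosine coefficient of `u` of index `(m, n)`: the `L²` pairing of `u` with `cosMode m n`
over `[-π, π]²`, without normalisation. -/
def cosCoeff (u : ℝ → ℝ → ℝ) (m n : ℕ) : ℝ :=
  ∫ x in (-π)..π, ∫ y in (-π)..π, u x y * cosMode m n x y

theorem continuous_cosMode (m n : ℕ) : Continuous (uncurry (cosMode m n)) := by
  simp only [uncurry_def, cosMode]
  fun_prop

theorem dblPeriodic_cosMode (m n : ℕ) : DblPeriodic (cosMode m n) := fun x y =>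
  ⟨congrArg (· * cos (n * y)) (periodic_cos_nat_mul m x),
    congrArg (cos (m * x) * ·) (periodic_cos_nat_mul n y)⟩

theorem symFun_cosMode (m n : ℕ) : SymFun (cosMode m n) := fun x y =>
  ⟨congrArg (· * cos (n * y)) (even_cos_const_mul m x),
    congrArg (cos (m * x) * ·) (even_cos_const_mul n y)⟩

section CosCoeff

variable {u v : ℝ → ℝ → ℝ}

theorem cosCoeff_eq_integral_mul_cos (u : ℝ → ℝ → ℝ) (m n : ℕ) :
    cosCoeff u m n =
      ∫ x in (-π)..π, (∫ y in (-π)..π, u x y * cos (n * y)) * cos (m * x) := by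
  simp_rw [cosCoeff, cosMode, ← intervalIntegral.integral_mul_const, mul_assoc, mul_comm]

theorem cosCoeff_flip (hu : Continuous (uncurry u)) (m n : ℕ) :
    cosCoeff (flip u) n m = cosCoeff u m n := by
  have hint : MeasureTheory.IntegrableOn (uncurry fun x y => u x y * cosMode m n x y)
      (Set.uIoc (-π) π ×ˢ Set.uIoc (-π) π) :=
    ((hu.mul (continuous_cosMode m n)).continuousOn.integrableOn_compact
      (isCompact_uIcc.prod isCompact_uIcc)).mono_set
      (Set.prod_mono Set.uIoc_subset_uIcc Set.uIoc_subset_uIcc)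
  rw [cosCoeff, cosCoeff, MeasureTheory.intervalIntegral_intervalIntegral_swap hint]
  simp only [flip, cosMode, mul_comm (cos (n * _))]

theorem cosCoeff_add (hu : Continuous (uncurry u)) (hv : Continuous (uncurry v)) (m n : ℕ) :
    cosCoeff (u + v) m n = cosCoeff u m n + cosCoeff v m n := by
  have hcont {w : ℝ → ℝ → ℝ} (hw : Continuous (uncurry w)) :
      Continuous (uncurry fun x y => w x y * cosMode m n x y) := hw.mul (continuous_cosMode m n)
  have hinner {w : ℝ → ℝ → ℝ} (hw : Continuous (uncurry w)) (x : ℝ) :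
      IntervalIntegrable (fun y => w x y * cosMode m n x y) MeasureTheory.volume (-π) π :=
    ((hcont hw).uncurry_left x).intervalIntegrable _ _
  have houter {w : ℝ → ℝ → ℝ} (hw : Continuous (uncurry w)) :
      IntervalIntegrable (fun x => ∫ y in (-π)..π, w x y * cosMode m n x y)
        MeasureTheory.volume (-π) π :=
    (intervalIntegral.continuous_parametric_intervalIntegral_of_continuous'
      (hcont hw) _ _).intervalIntegrable _ _
  simp_rw [cosCoeff, Pi.add_apply, add_mul]
  rw [← intervalIntegral.integral_add (houter hu) (houter hv)]
  simp_rw [← intervalIntegral.integral_add (hinner hu _) (hinner hv _)]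

theorem cosCoeff_smul (c : ℝ) (u : ℝ → ℝ → ℝ) (m n : ℕ) :
    cosCoeff (c • u) m n = c * cosCoeff u m n := by
  simp_rw [cosCoeff, Pi.smul_apply, smul_eq_mul, mul_assoc, intervalIntegral.integral_const_mul]

theorem cosCoeff_cosMode (p q m n : ℕ) :
    cosCoeff (cosMode p q) m n =
      (∫ x in (-π)..π, cos (p * x) * cos (m * x)) *
        ∫ y in (-π)..π, cos (q * y) * cos (n * y) := by
  simp_rw [cosCoeff, cosMode, mul_mul_mul_comm _ (cos (q * _)), intervalIntegral.integral_const_mul,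
    intervalIntegral.integral_mul_const]

theorem cosCoeff_cosMode_of_ne {p q m n : ℕ} (h : ¬(m = p ∧ n = q)) :
    cosCoeff (cosMode p q) m n = 0 := by
  rw [cosCoeff_cosMode, mul_eq_zero]
  exact (not_and_or.mp h).imp (fun hm => integral_cos_mul_cos_of_ne (Ne.symm hm))
    (fun hn => integral_cos_mul_cos_of_ne (Ne.symm hn))

theorem cosCoeff_cosMode_self_pos (p q : ℕ) : 0 < cosCoeff (cosMode p q) p q := by
  rw [cosCoeff_cosMode]
  exact mul_pos (integral_cos_mul_self_pos p) (integral_cos_mul_self_pos q)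

theorem eq_zero_of_cosCoeff_eq_zero (hu : Continuous (uncurry u)) (hper : DblPeriodic u)
    (hsym : SymFun u) (hcoeff : ∀ m n, cosCoeff u m n = 0) : u = 0 := by
  have hslice (n : ℕ) : (fun x => ∫ y in (-π)..π, u x y * cos (n * y)) = 0 :=
    eq_zero_of_integral_mul_cos_eq_zero
      (intervalIntegral.continuous_parametric_intervalIntegral_of_continuous'
        (hu.mul (by fun_prop : Continuous fun p : ℝ × ℝ => cos (n * p.2))) _ _)
      (fun x => by simp only [(hper x _).1]) (fun x => by simp only [(hsym x _).1])
      (fun m => by rw [← cosCoeff_eq_integral_mul_cos, hcoeff])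
  ext1 x
  exact eq_zero_of_integral_mul_cos_eq_zero (hu.uncurry_left x) (fun y => (hper x y).2)
    (fun y => (hsym x y).2) (fun n => congrFun (hslice n) x)

theorem eq_of_cosCoeff_eq (hu : Continuous (uncurry u)) (hv : Continuous (uncurry v))
    (huper : DblPeriodic u) (hvper : DblPeriodic v) (husym : SymFun u) (hvsym : SymFun v)
    (hcoeff : ∀ m n, cosCoeff u m n = cosCoeff v m n) : u = v := by
  refine sub_eq_zero.mp (eq_zero_of_cosCoeff_eq_zero (hu.sub hv) (huper.sub hvper)
    (husym.sub hvsym) fun m n => ?_)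
  have hneg : Continuous (uncurry ((-1 : ℝ) • v)) := hv.const_smul (-1 : ℝ)
  rw [sub_eq_add_neg, ← neg_one_smul ℝ v, cosCoeff_add hu hneg, cosCoeff_smul, hcoeff,
    neg_one_mul, add_neg_cancel]

end CosCoeff

section Laplacian

variable {u : ℝ → ℝ → ℝ}

theorem cosCoeff_deriv_deriv_snd (hu : ∀ x, ContDiff ℝ 2 (u x))
    (hper : ∀ x, Periodic (u x) (2 * π)) (m n : ℕ) :
    cosCoeff (fun x y => deriv (deriv (u x)) y) m n = -(n : ℝ) ^ 2 * cosCoeff u m n := by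
  simp_rw [cosCoeff_eq_integral_mul_cos, integral_deriv_deriv_mul_cos (hu _) (hper _), mul_assoc,
    intervalIntegral.integral_const_mul]

theorem cosCoeff_lap (hu : ContDiff ℝ 2 (uncurry u)) (hper : DblPeriodic u) (m n : ℕ) :
    cosCoeff (lap u) m n = -((m : ℝ) ^ 2 + (n : ℝ) ^ 2) * cosCoeff u m n := by
  let uyy : ℝ → ℝ → ℝ := fun x y => deriv (deriv (u x)) y
  let uxx : ℝ → ℝ → ℝ := flip fun y x => deriv (deriv (flip u y)) x
  have hflip : ContDiff ℝ 2 (uncurry (flip u)) := contDiff_uncurry_flip hu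
  have hcyy : Continuous (uncurry uyy) := continuous_uncurry_deriv_deriv_snd hu
  have hcxx : Continuous (uncurry uxx) :=
    (continuous_uncurry_deriv_deriv_snd hflip).comp continuous_swap
  have hyy : cosCoeff uyy m n = -(n : ℝ) ^ 2 * cosCoeff u m n :=
    cosCoeff_deriv_deriv_snd (fun x => hu.comp (contDiff_prodMk_right x))
      (fun x y => (hper x y).2) m n
  have hxx : cosCoeff uxx m n = -(m : ℝ) ^ 2 * cosCoeff u m n := by
    rw [← cosCoeff_flip hcxx, ← cosCoeff_flip hu.continuous]
    exact cosCoeff_deriv_deriv_snd (fun y => hflip.comp (contDiff_prodMk_right y))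
      (fun y x => (hper x y).1) n m
  calc cosCoeff (lap u) m n = cosCoeff uxx m n + cosCoeff uyy m n := cosCoeff_add hcxx hcyy m n
    _ = -((m : ℝ) ^ 2 + (n : ℝ) ^ 2) * cosCoeff u m n := by rw [hxx, hyy]; ring

theorem cosCoeff_eq_zero_of_lap_add_mul_eq_zero (hu : ContDiff ℝ 2 (uncurry u))
    (hper : DblPeriodic u) {μ : ℝ} (heq : ∀ x y, lap u x y + μ * u x y = 0) {m n : ℕ}
    (hmn : (m : ℝ) ^ 2 + (n : ℝ) ^ 2 ≠ μ) : cosCoeff u m n = 0 := by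
  have hlap : lap u = (-μ) • u := by
    ext x y
    simpa using eq_neg_of_add_eq_zero_left (heq x y)
  have hcoeff := cosCoeff_lap hu hper m n
  rw [hlap, cosCoeff_smul, mul_eq_mul_right_iff, neg_inj] at hcoeff
  exact hcoeff.resolve_left hmn.symm

end Laplacian

theorem kernel_one_dimensional_symmetric_general {u : ℝ → ℝ → ℝ} {p q : ℕ}
    (hu : ContDiff ℝ 2 (uncurry u)) (hper : DblPeriodic u) (hsym : SymFun u)
    (heq : ∀ x y, lap u x y + ((p : ℝ) ^ 2 + (q : ℝ) ^ 2) * u x y = 0)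
    (hpq : ∀ m n : ℕ, m ^ 2 + n ^ 2 = p ^ 2 + q ^ 2 → m = p ∧ n = q) :
    ∃ α : ℝ, ∀ x y, u x y = α * cos (p * x) * cos (q * y) := by
  let α : ℝ := cosCoeff u p q / cosCoeff (cosMode p q) p q
  have hcoeff (m n : ℕ) : cosCoeff u m n = cosCoeff (α • cosMode p q) m n := by
    rw [cosCoeff_smul]
    by_cases hmn : m = p ∧ n = q
    · obtain ⟨rfl, rfl⟩ := hmn
      exact (div_mul_cancel₀ _ (cosCoeff_cosMode_self_pos m n).ne').symm
    · rw [cosCoeff_cosMode_of_ne hmn, mul_zero]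
      exact cosCoeff_eq_zero_of_lap_add_mul_eq_zero hu hper heq fun h =>
        hmn (hpq m n (mod_cast h))
  have hmode : u = α • cosMode p q :=
    eq_of_cosCoeff_eq hu.continuous ((continuous_cosMode p q).const_smul α) hper
      ((dblPeriodic_cosMode p q).const_smul α) hsym ((symFun_cosMode p q).const_smul α) hcoeff
  refine ⟨α, fun x y => ?_⟩
  rw [hmode, mul_assoc]
  rfl

theorem eq_one_and_eq_one_of_sq_add_sq_eq_two {m n : ℕ} (h : m ^ 2 + n ^ 2 = 2) :
    m = 1 ∧ n = 1 := by
  have hm : m < 2 := by nlinarith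
  have hn : n < 2 := by nlinarith
  interval_cases m <;> interval_cases n <;> simp_all

/-- In the class of symmetric doubly 2π-periodic functions, the kernel of −Δ − 2 is
one-dimensional, spanned by cos x cos y. -/
theorem kernel_one_dimensional_symmetric (u : ℝ → ℝ → ℝ)
    (hs : Smooth2 u) (hper : DblPeriodic u) (hsym : SymFun u)
    (heq : ∀ x y : ℝ, lap u x y + 2 * u x y = 0) :
    ∃ α : ℝ, ∀ x y : ℝ, u x y = α * Real.cos x * Real.cos y := by
  simpa using kernel_one_dimensional_symmetric_general (p := 1) (q := 1) (contDiff_infty.mp hs 2)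
    hper hsym (by norm_num [heq]) fun _ _ => eq_one_and_eq_one_of_sq_add_sq_eq_two
end
end
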